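/- Let G = ∑_{n=0}^∞ (−1)^n/(2n+1)² be Catalan's constant. Then G = (1/64) ∑_{n=1}^∞ (−1)^{n−1} 256^n (40n² − 24n + 3) / (C(4n, 2n)² C(2n, n) n³ (2n−1)). -/

import Mathlib

/-!
The proof is by the Wilf–Zeilberger method. With `A m = (1/2)(3/2)⋯(m - 1/2)`, put
`F n k = (-1)^(n+k) (2n)! n!² A(k)² / A(k+2n+1)²`, so that `F 0 k = 4 (-1)^k / (2k+1)²`.
There is a companion `W n k = F n k · R n k`, with `R` an explicit rational function, such that
`F (n+1) k - F n k = W n (k+1) - W n k` (`lupas_wz`).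

Since `|F (n+1) k| ≤ |F n k| / 4`, each row sum `S n = ∑ₖ F n k` converges and `S n → 0`.
Summing the relation over `k`, and using `W n k → 0` as `k → ∞`, gives `S n - S (n+1) = W n 0`.
Summing over `n` yields `4 G = S 0 = ∑ₙ W n 0`, and `W n 0` is `1/16` of the term in the theorem
once the Pochhammer symbols are rewritten as central binomial coefficients.
-/

/-- Catalan's constant `G = ∑_{n ≥ 0} (-1)^n / (2n+1)²`. -/
noncomputable def catalanConst : ℝ := ∑' n : ℕ, (-1 : ℝ) ^ n / (2 * (n : ℝ) + 1) ^ 2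

open Filter Topology

/-- The Pochhammer symbol `(1/2)_m`, that is, `(1/2)(3/2)⋯(m - 1/2)`. -/
noncomputable def halfPoch (m : ℕ) : ℝ := ∏ i ∈ Finset.range m, ((i : ℝ) + 1 / 2)

lemma halfPoch_succ (m : ℕ) : halfPoch (m + 1) = halfPoch m * ((m : ℝ) + 1 / 2) :=
  Finset.prod_range_succ _ _

lemma halfPoch_pos (m : ℕ) : 0 < halfPoch m :=
  Finset.prod_pos fun i _ => by positivity

lemma centralBinom_eq_halfPoch (m : ℕ) :
    (Nat.centralBinom m : ℝ) = 4 ^ m * halfPoch m / (m.factorial : ℝ) := by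
  induction m with
  | zero => simp [halfPoch]
  | succ m ih =>
    have h : ((m : ℝ) + 1) * (Nat.centralBinom (m + 1) : ℝ)
        = 2 * (2 * (m : ℝ) + 1) * (Nat.centralBinom m : ℝ) := by
      exact_mod_cast Nat.succ_mul_centralBinom_succ m
    have hm : (m : ℝ) + 1 ≠ 0 := by positivity
    have hf : (m.factorial : ℝ) ≠ 0 := by positivity
    apply mul_left_cancel₀ hm
    rw [h, ih, halfPoch_succ, Nat.factorial_succ]
    push_cast
    field_simp
    ring

/-- The Wilf–Zeilberger kernel interpolating from `4 G` (the row `n = 0`) to `0`. -/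
noncomputable def lupasF (n k : ℕ) : ℝ :=
  (-1) ^ (n + k) * ((2 * n).factorial : ℝ) * (n.factorial : ℝ) ^ 2 * halfPoch k ^ 2 /
    halfPoch (k + 2 * n + 1) ^ 2

/-- The ratio of the companion `W n k` to `F n k`. -/
noncomputable def lupasR (n k : ℕ) : ℝ :=
  (((k : ℝ) + 1 / 2) ^ 2 / 2 + 3 * (2 * (n : ℝ) + 1) * ((k : ℝ) + 1 / 2) / 2 +
    (5 * (2 * (n : ℝ) + 1) ^ 2 + (2 * (n : ℝ) + 1)) / 4) / ((k : ℝ) + 2 * n + 3 / 2) ^ 2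

lemma lupasF_succ_left (n k : ℕ) :
    lupasF (n + 1) k = -lupasF n k * ((2 * (n : ℝ) + 1) * (2 * n + 2) * (n + 1) ^ 2 /
      (((k : ℝ) + 2 * n + 3 / 2) ^ 2 * ((k : ℝ) + 2 * n + 5 / 2) ^ 2)) := by
  have e1 : k + 2 * (n + 1) + 1 = k + 2 * n + 1 + 1 + 1 := by ring
  have e2 : 2 * (n + 1) = 2 * n + 1 + 1 := by ring
  have h := (halfPoch_pos (k + 2 * n + 1)).ne'
  have hx : (k : ℝ) + 2 * n + 1 + 1 / 2 = k + 2 * n + 3 / 2 := by ring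
  have hy : (k : ℝ) + 2 * n + 1 + 1 + 1 / 2 = k + 2 * n + 5 / 2 := by ring
  have hx0 : (k : ℝ) + 2 * n + 3 / 2 ≠ 0 := by positivity
  have hy0 : (k : ℝ) + 2 * n + 5 / 2 ≠ 0 := by positivity
  have e3 : n + 1 + k = n + k + 1 := by ring
  unfold lupasF
  rw [e1, e2, e3, halfPoch_succ (k + 2 * n + 1 + 1), halfPoch_succ (k + 2 * n + 1),
    Nat.factorial_succ, Nat.factorial_succ, Nat.factorial_succ, pow_succ]
  push_cast
  rw [hx, hy]
  generalize (k : ℝ) + 2 * n + 3 / 2 = x at *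
  generalize (k : ℝ) + 2 * n + 5 / 2 = y at *
  field_simp
  ring

lemma lupasF_succ_right (n k : ℕ) :
    lupasF n (k + 1) = -lupasF n k *
      (((k : ℝ) + 1 / 2) ^ 2 / ((k : ℝ) + 2 * n + 3 / 2) ^ 2) := by
  have e1 : k + 1 + 2 * n + 1 = k + 2 * n + 1 + 1 := by ring
  have h := (halfPoch_pos (k + 2 * n + 1)).ne'
  have hx : (k : ℝ) + 2 * n + 1 + 1 / 2 = k + 2 * n + 3 / 2 := by ring
  have hx0 : (k : ℝ) + 2 * n + 3 / 2 ≠ 0 := by positivity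
  have e3 : n + (k + 1) = n + k + 1 := by ring
  unfold lupasF
  rw [e1, e3, halfPoch_succ (k + 2 * n + 1), halfPoch_succ k, pow_succ]
  push_cast
  rw [hx]
  generalize (k : ℝ) + 2 * n + 3 / 2 = x at *
  field_simp

lemma lupas_wz (n k : ℕ) :
    lupasF (n + 1) k - lupasF n k =
      lupasF n (k + 1) * lupasR n (k + 1) - lupasF n k * lupasR n k := by
  rw [lupasF_succ_left, lupasF_succ_right]
  unfold lupasR
  have hx0 : (k : ℝ) + 2 * n + 3 / 2 ≠ 0 := by positivity
  have hy0 : (k : ℝ) + 2 * n + 5 / 2 ≠ 0 := by positivity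
  have hy : ((k + 1 : ℕ) : ℝ) + 2 * n + 3 / 2 = k + 2 * n + 5 / 2 := by push_cast; ring
  rw [hy]
  generalize hX : (k : ℝ) + 2 * n + 3 / 2 = x at *
  generalize hY : (k : ℝ) + 2 * n + 5 / 2 = y at *
  push_cast
  field_simp
  subst hX hY
  ring

lemma lupasR_bound (n k : ℕ) : |lupasR n k| ≤ 2 := by
  unfold lupasR
  rw [abs_of_nonneg (by positivity), div_le_iff₀ (by positivity)]
  have hn : (0 : ℝ) ≤ n := by positivity
  have hk : (0 : ℝ) ≤ k := by positivity
  nlinarith [mul_nonneg hn hk, mul_nonneg hn hn, mul_nonneg hk hk]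

lemma lupasF_zero (k : ℕ) : lupasF 0 k = 4 * ((-1 : ℝ) ^ k / (2 * (k : ℝ) + 1) ^ 2) := by
  have h := (halfPoch_pos k).ne'
  have h1 : (k : ℝ) + 1 / 2 = (2 * k + 1) / 2 := by ring
  have h2 : 2 * (k : ℝ) + 1 ≠ 0 := by positivity
  simp only [lupasF, mul_zero, add_zero, zero_add, halfPoch_succ, h1]
  simp
  field_simp
  norm_num

lemma lupasF_abs_succ (n k : ℕ) : |lupasF (n + 1) k| ≤ |lupasF n k| * (1 / 4) := by
  rw [lupasF_succ_left, abs_mul, abs_neg]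
  refine mul_le_mul_of_nonneg_left ?_ (abs_nonneg _)
  rw [abs_of_nonneg (by positivity), div_le_iff₀ (by positivity)]
  have hn : (0 : ℝ) ≤ n := by positivity
  have hk : (0 : ℝ) ≤ k := by positivity
  have h1 : (2 * (n : ℝ) + 1) * (2 * n + 2) ≤ ((k : ℝ) + 2 * n + 3 / 2) ^ 2 := by
    nlinarith [mul_nonneg hn hk, mul_nonneg hk hk]
  have h2 : ((n : ℝ) + 1) ^ 2 ≤ 1 / 4 * ((k : ℝ) + 2 * n + 5 / 2) ^ 2 := by
    nlinarith [mul_nonneg hn hk, mul_nonneg hk hk]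
  calc (2 * (n : ℝ) + 1) * (2 * n + 2) * (n + 1) ^ 2
      ≤ ((k : ℝ) + 2 * n + 3 / 2) ^ 2 * (1 / 4 * ((k : ℝ) + 2 * n + 5 / 2) ^ 2) := by gcongr
    _ = _ := by ring

lemma lupasF_abs_le (n k : ℕ) : |lupasF n k| ≤ (1 / 4) ^ n * |lupasF 0 k| := by
  induction n with
  | zero => simp
  | succ n ih =>
    calc _ ≤ |lupasF n k| * (1 / 4) := lupasF_abs_succ n k
      _ ≤ ((1 / 4) ^ n * |lupasF 0 k|) * (1 / 4) := by gcongr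
      _ = _ := by ring

lemma summable_lupasF_zero : Summable fun k => |lupasF 0 k| := by
  have h : Summable fun k : ℕ => 4 * (1 / ((k + 1 : ℕ) : ℝ) ^ 2) :=
    ((summable_nat_add_iff 1).2 (Real.summable_one_div_nat_pow.2 one_lt_two)).mul_left 4
  refine h.of_nonneg_of_le (fun k => abs_nonneg _) fun k => ?_
  rw [lupasF_zero, abs_mul, abs_div, abs_pow, abs_neg, abs_one, one_pow,
    abs_of_nonneg (by positivity : (0 : ℝ) ≤ 4),
    abs_of_nonneg (by positivity : (0 : ℝ) ≤ (2 * (k : ℝ) + 1) ^ 2)]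
  have hk : (0 : ℝ) ≤ k := by positivity
  push_cast
  gcongr
  linarith

lemma summable_lupasF (n : ℕ) : Summable (lupasF n) :=
  Summable.of_norm_bounded (summable_lupasF_zero.mul_left ((1 / 4) ^ n)) fun k => by
    simpa [Real.norm_eq_abs] using lupasF_abs_le n k

/-- The relation `lupas_wz` summed over `k`. -/
lemma lupas_row_diff (n : ℕ) :
    (∑' k, lupasF n k) - ∑' k, lupasF (n + 1) k = lupasF n 0 * lupasR n 0 := by
  have hW : Tendsto (fun k => lupasF n k * lupasR n k) atTop (𝓝 0) := by
    have h0 : Tendsto (fun k => |lupasF n k| * 2) atTop (𝓝 0) := by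
      simpa using (summable_lupasF n).tendsto_atTop_zero.abs.mul_const 2
    refine squeeze_zero_norm (fun k => ?_) h0
    rw [Real.norm_eq_abs, abs_mul]
    exact mul_le_mul_of_nonneg_left (lupasR_bound n k) (abs_nonneg _)
  have hs := ((summable_lupasF (n + 1)).sub (summable_lupasF n)).hasSum.tendsto_sum_nat
  rw [(summable_lupasF (n + 1)).tsum_sub (summable_lupasF n)] at hs
  have he : (fun N => ∑ k ∈ Finset.range N, (lupasF (n + 1) k - lupasF n k))
      = fun N => lupasF n N * lupasR n N - lupasF n 0 * lupasR n 0 := by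
    funext N
    simp_rw [lupas_wz]
    exact Finset.sum_range_sub (fun k => lupasF n k * lupasR n k) N
  rw [he] at hs
  have := tendsto_nhds_unique hs (hW.sub_const _)
  linarith

lemma tendsto_lupas_rows : Tendsto (fun n => ∑' k, lupasF n k) atTop (𝓝 0) := by
  have h0 : Tendsto (fun n : ℕ => (1 / 4 : ℝ) ^ n * ∑' k, |lupasF 0 k|) atTop (𝓝 0) := by
    simpa using (tendsto_pow_atTop_nhds_zero_of_lt_one (r := (1 / 4 : ℝ)) (by norm_num)
      (by norm_num)).mul_const (∑' k, |lupasF 0 k|)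
  refine squeeze_zero_norm (fun n => ?_) h0
  rw [← tsum_mul_left]
  exact tsum_of_norm_bounded (summable_lupasF_zero.mul_left ((1 / 4) ^ n)).hasSum
    fun k => by simpa [Real.norm_eq_abs] using lupasF_abs_le n k

lemma hasSum_lupas : HasSum (fun n => lupasF n 0 * lupasR n 0) (∑' k, lupasF 0 k) := by
  have hsum : Summable fun n => lupasF n 0 * lupasR n 0 := by
    have hg : Summable fun n : ℕ => (1 / 4 : ℝ) ^ n * (|lupasF 0 0| * 2) :=
      (summable_geometric_of_lt_one (by norm_num) (by norm_num)).mul_right _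
    refine Summable.of_norm_bounded hg fun n => ?_
    rw [Real.norm_eq_abs, abs_mul, ← mul_assoc]
    exact mul_le_mul (lupasF_abs_le n 0) (lupasR_bound n 0) (abs_nonneg _) (by positivity)
  rw [hsum.hasSum_iff_tendsto_nat]
  simp_rw [← lupas_row_diff]
  have he := fun N => Finset.sum_range_sub' (fun n => ∑' k, lupasF n k) N
  simp_rw [he]
  simpa using tendsto_lupas_rows.const_sub (∑' k, lupasF 0 k)

/-- The boundary term `W n 0` in terms of the central binomial coefficients of the theorem. -/
lemma lupas_term (n : ℕ) :
    (-1 : ℝ) ^ n * 256 ^ (n + 1) * (40 * ((n : ℝ) + 1) ^ 2 - 24 * ((n : ℝ) + 1) + 3) /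
        ((Nat.choose (4 * (n + 1)) (2 * (n + 1)) : ℝ) ^ 2 *
          (Nat.choose (2 * (n + 1)) (n + 1) : ℝ) * ((n : ℝ) + 1) ^ 3 *
          (2 * ((n : ℝ) + 1) - 1)) = 16 * (lupasF n 0 * lupasR n 0) := by
  have hc1 : (Nat.choose (4 * (n + 1)) (2 * (n + 1)) : ℝ)
      = 4 ^ (2 * (n + 1)) * halfPoch (2 * (n + 1)) / ((2 * (n + 1)).factorial : ℝ) := by
    rw [← centralBinom_eq_halfPoch, Nat.centralBinom_eq_two_mul_choose]
    congr 2
    ring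
  have hc2 : (Nat.choose (2 * (n + 1)) (n + 1) : ℝ)
      = ((2 * (n + 1)).factorial : ℝ) / ((n + 1).factorial : ℝ) ^ 2 := by
    rw [Nat.cast_choose ℝ (by omega : n + 1 ≤ 2 * (n + 1)),
      show 2 * (n + 1) - (n + 1) = n + 1 by omega, sq]
  have h256 : (256 : ℝ) ^ (n + 1) = (4 ^ (2 * (n + 1))) ^ 2 := by
    rw [← pow_mul, show 2 * (n + 1) * 2 = 4 * (n + 1) by ring, pow_mul]
    norm_num
  have hfac : ((2 * (n + 1)).factorial : ℝ)
      = (2 * (n : ℝ) + 2) * ((2 * n + 1) * ((2 * n).factorial : ℝ)) := by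
    rw [show 2 * (n + 1) = 2 * n + 1 + 1 by ring, Nat.factorial_succ, Nat.factorial_succ]
    push_cast
    ring
  have hfac' : ((n + 1).factorial : ℝ) = ((n : ℝ) + 1) * (n.factorial : ℝ) := by
    rw [Nat.factorial_succ]
    push_cast
    ring
  have hA : halfPoch (2 * (n + 1)) = halfPoch (2 * n + 1) * (2 * (n : ℝ) + 3 / 2) := by
    rw [show 2 * (n + 1) = 2 * n + 1 + 1 by ring, halfPoch_succ]
    push_cast
    ring
  have hA0 : halfPoch 0 = 1 := by simp [halfPoch]
  rw [hc1, hc2, h256, hfac, hfac', hA, show 2 * ((n : ℝ) + 1) - 1 = 2 * n + 1 by ring,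
    show 2 * (n : ℝ) + 2 = 2 * (n + 1) by ring]
  unfold lupasF lupasR
  simp only [zero_add, add_zero, hA0, Nat.cast_zero]
  have p1 := (halfPoch_pos (2 * n + 1)).ne'
  have p2 : (4 : ℝ) ^ (2 * (n + 1)) ≠ 0 := by positivity
  have p3 : ((2 * n).factorial : ℝ) ≠ 0 := by positivity
  have p4 : (n.factorial : ℝ) ≠ 0 := by positivity
  have p5 : (n : ℝ) + 1 ≠ 0 := by positivity
  have p6 : 2 * (n : ℝ) + 1 ≠ 0 := by positivity
  have p7 : 2 * (n : ℝ) + 3 / 2 ≠ 0 := by positivity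
  generalize (4 : ℝ) ^ (2 * (n + 1)) = q at *
  generalize halfPoch (2 * n + 1) = A at *
  generalize hz : 2 * (n : ℝ) + 3 / 2 = z at *
  field_simp
  ring

theorem stmt7 :
    catalanConst = (1 / 64) * ∑' n : ℕ,
      (-1 : ℝ) ^ n * 256 ^ (n + 1) * (40 * ((n : ℝ) + 1) ^ 2 - 24 * ((n : ℝ) + 1) + 3) /
        ((Nat.choose (4 * (n + 1)) (2 * (n + 1)) : ℝ) ^ 2 *
          (Nat.choose (2 * (n + 1)) (n + 1) : ℝ) * ((n : ℝ) + 1) ^ 3 *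
          (2 * ((n : ℝ) + 1) - 1)) := by
  have h := hasSum_lupas.tsum_eq
  simp_rw [lupasF_zero] at h
  rw [tsum_mul_left] at h
  simp_rw [lupas_term]
  rw [tsum_mul_left, h]
  unfold catalanConst
  ring
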